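/- Any two projection games G and H satisfy ‖G ⊗ H‖ ≤ val₊(G) · ‖H‖, where ‖·‖ denotes the collision value. -/

import Mathlib

open Finset

/-- A projection game: finite nonempty question sets `Q1` (Alice) and `Q2` (Bob),
a finite nonempty alphabet `A`, and a probability mass function `μ` on triples
`(u, v, π)` where `π : A → Option A` encodes a projection constraint
(the answer pair `(α, β)` satisfies `π` iff `π β = some α`). -/
structure ProjGame where
  Q1 : Type
  Q2 : Type
  A : Type
  [fQ1 : Fintype Q1]
  [fQ2 : Fintype Q2]
  [fA : Fintype A]
  [neQ1 : Nonempty Q1]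
  [neQ2 : Nonempty Q2]
  [neA : Nonempty A]
  [dQ1 : DecidableEq Q1]
  [dQ2 : DecidableEq Q2]
  [dA : DecidableEq A]
  μ : Q1 × Q2 × (A → Option A) → ℝ
  μ_nonneg : ∀ x, 0 ≤ μ x
  μ_sum : ∑ x, μ x = 1

attribute [instance] ProjGame.fQ1 ProjGame.fQ2 ProjGame.fA
  ProjGame.neQ1 ProjGame.neQ2 ProjGame.neA ProjGame.dQ1 ProjGame.dQ2 ProjGame.dA

namespace ProjGame

variable (G : ProjGame)

/-- The `U`-marginal (Alice-side marginal) of `μ`. -/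
noncomputable def wU (u : G.Q1) : ℝ := ∑ v, ∑ π, G.μ (u, v, π)

/-- The `V`-marginal (Bob-side marginal) of `μ`. -/
noncomputable def wV (v : G.Q2) : ℝ := ∑ u, ∑ π, G.μ (u, v, π)

/-- The game operator: `(Gf)(u,α) = E_{(v,π)|u} [∑_{β : π β = some α} f (v,β)]`. -/
noncomputable def op (f : G.Q2 × G.A → ℝ) : G.Q1 × G.A → ℝ :=
  fun p =>
    (∑ v, ∑ π, G.μ (p.1, v, π) * ∑ β, if π β = some p.2 then f (v, β) else 0) / G.wU p.1

/-- Squared norm on functions on `U × Σ`: `‖g‖² = E_u [∑_α g(u,α)²]`. -/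
noncomputable def normUsq (g : G.Q1 × G.A → ℝ) : ℝ := ∑ u, G.wU u * ∑ α, (g (u, α)) ^ 2

/-- Squared norm on functions on `V × Σ`: `‖f‖² = E_v [∑_β f(v,β)²]`. -/
noncomputable def normVsq (f : G.Q2 × G.A → ℝ) : ℝ := ∑ v, G.wV v * ∑ β, (f (v, β)) ^ 2

/-- Inner product `⟨g, g'⟩ = E_u [∑_α g(u,α) g'(u,α)]`. -/
noncomputable def inn (g g' : G.Q1 × G.A → ℝ) : ℝ :=
  ∑ u, G.wU u * ∑ α, g (u, α) * g' (u, α)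

/-- An assignment for Bob. -/
def IsBob (f : G.Q2 × G.A → ℝ) : Prop := (∀ p, 0 ≤ f p) ∧ ∀ v, ∑ β, f (v, β) = 1

/-- An assignment for Alice. -/
def IsAlice (g : G.Q1 × G.A → ℝ) : Prop := (∀ p, 0 ≤ g p) ∧ ∀ u, ∑ α, g (u, α) = 1

/-- The value of the game: `val(G) = max ⟨g, Gf⟩` over assignments. -/
noncomputable def val : ℝ :=
  sSup { x | ∃ f g, G.IsBob f ∧ G.IsAlice g ∧ x = G.inn g (G.op f) }

/-- The collision value `‖G‖ = max_f ‖Gf‖` over assignments `f` for Bob. -/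
noncomputable def collVal : ℝ :=
  sSup { x | ∃ f, G.IsBob f ∧ x = Real.sqrt (G.normUsq (G.op f)) }

/-- Product of projection constraints. -/
def tensorC {A A' : Type} (π : A → Option A) (π' : A' → Option A') :
    A × A' → Option (A × A') :=
  fun b => (π b.1).bind fun a => (π' b.2).map fun a' => (a, a')

/-- The product (parallel repetition) of two projection games. -/
noncomputable def tensor (G H : ProjGame) : ProjGame where
  Q1 := G.Q1 × H.Q1
  Q2 := G.Q2 × H.Q2
  A := G.A × H.A
  μ := fun x =>
    ∑ y : (G.Q1 × G.Q2 × (G.A → Option G.A)) × (H.Q1 × H.Q2 × (H.A → Option H.A)),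
      if ((y.1.1, y.2.1), (y.1.2.1, y.2.2.1), tensorC y.1.2.2 y.2.2.2) = x
      then G.μ y.1 * H.μ y.2 else 0
  μ_nonneg := by
    intro x
    refine Finset.sum_nonneg fun y _ => ?_
    split
    · exact mul_nonneg (G.μ_nonneg _) (H.μ_nonneg _)
    · exact le_refl 0
  μ_sum := by
    rw [Finset.sum_comm]
    simp only [Finset.sum_ite_eq, Finset.mem_univ, if_true]
    rw [Fintype.sum_prod_type]
    calc (∑ y1, ∑ y2, G.μ y1 * H.μ y2)
        = (∑ y1, G.μ y1) * (∑ y2, H.μ y2) := by rw [Finset.sum_mul_sum]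
      _ = 1 := by rw [G.μ_sum, H.μ_sum, mul_one]

/-- `G.iterTensor k` is the `(k+1)`-fold parallel repetition `G^{⊗(k+1)}`. -/
noncomputable def iterTensor (G : ProjGame) : ℕ → ProjGame
  | 0 => G
  | n + 1 => G.tensor (G.iterTensor n)

/-- `val₊(G)`: supremum of values of vector assignments. -/
noncomputable def valPlus (G : ProjGame) : ℝ :=
  sSup { x | ∃ n : ℕ, 0 < n ∧ ∃ f : G.Q2 × G.A → Fin n → ℝ,
    (∀ p i, 0 ≤ f p i) ∧
    (∀ v, Real.sqrt (∑ i, (∑ β, f (v, β) i) ^ 2) ≤ 1) ∧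
    x = Real.sqrt (∑ u, G.wU u * ∑ α, ∑ i, (G.op (fun q => f q i) (u, α)) ^ 2) }

/-- `‖Th‖² = E_v [(∑_β h(v,β))²]`. -/
noncomputable def Tnormsq (G : ProjGame) (h : G.Q2 × G.A → ℝ) : ℝ :=
  ∑ v, G.wV v * (∑ β, h (v, β)) ^ 2

/-- `λ₊(G)`: supremum of `‖Gh‖/‖Th‖` over nonnegative `h` with `‖Th‖ > 0`. -/
noncomputable def lambdaPlus (G : ProjGame) : ℝ :=
  sSup { x | ∃ h : G.Q2 × G.A → ℝ, (∀ p, 0 ≤ h p) ∧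
    0 < Real.sqrt (G.Tnormsq h) ∧
    x = Real.sqrt (G.normUsq (G.op h)) / Real.sqrt (G.Tnormsq h) }

/-- The symmetrized distribution on `V × V` (with the constraints marginalized out). -/
noncomputable def msym (G : ProjGame) (v v' : G.Q2) : ℝ :=
  ∑ u, ((∑ π, G.μ (u, v, π)) * (∑ π', G.μ (u, v', π'))) / G.wU u

/-- `G` is `γ`-expanding: the Markov operator of the symmetrized constraint graph has
spectral gap at least `γ`, i.e. `|⟨x, Ax⟩| ≤ (1-γ) E_v[x(v)²]` for mean-zero `x`. -/
def IsExpanding (G : ProjGame) (γ : ℝ) : Prop :=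
  ∀ x : G.Q2 → ℝ, (∑ v, G.wV v * x v) = 0 →
    |∑ v, ∑ v', G.msym v v' * x v * x v'| ≤ (1 - γ) * ∑ v, G.wV v * (x v) ^ 2

/-- The symmetrized distribution on `(v, v', π, π')`. -/
noncomputable def msymFull (G : ProjGame) (v v' : G.Q2) (π π' : G.A → Option G.A) : ℝ :=
  ∑ u, (G.μ (u, v, π) * G.μ (u, v', π')) / G.wU u

/-- The value of the assignment `x` in the symmetrized game `G_sym`. -/
noncomputable def symValAssign (G : ProjGame) (x : G.Q2 → G.A) : ℝ :=
  ∑ v, ∑ v', ∑ π, ∑ π', G.msymFull v v' π π' *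
    (if ∃ α, π (x v) = some α ∧ π' (x v') = some α then 1 else 0)

/-- The value of the symmetrized game `G_sym`. -/
noncomputable def symVal (G : ProjGame) : ℝ :=
  sSup { r | ∃ x : G.Q2 → G.A, r = G.symValAssign x }

end ProjGame

namespace ProjGame

lemma tensor_pair (G H : ProjGame)
    (K : (G.Q1 × H.Q1) × (G.Q2 × H.Q2) × (G.A × H.A → Option (G.A × H.A)) → ℝ) :
    (∑ x : (G.Q1 × H.Q1) × (G.Q2 × H.Q2) × (G.A × H.A → Option (G.A × H.A)),
        (G.tensor H).μ x * K x)
      = ∑ y : (G.Q1 × G.Q2 × (G.A → Option G.A)) × (H.Q1 × H.Q2 × (H.A → Option H.A)),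
        G.μ y.1 * H.μ y.2 *
          K ((y.1.1, y.2.1), (y.1.2.1, y.2.2.1), tensorC y.1.2.2 y.2.2.2) := by
  simp only [tensor, Finset.sum_mul, ite_mul, zero_mul]
  rw [Finset.sum_comm]
  refine Finset.sum_congr rfl fun y _ => ?_
  rw [Finset.sum_eq_single ((y.1.1, y.2.1), (y.1.2.1, y.2.2.1), tensorC y.1.2.2 y.2.2.2)]
  · rw [if_pos rfl]
  · intro b _ hb
    rw [if_neg (Ne.symm hb)]
  · intro h
    exact absurd (Finset.mem_univ _) h

lemma tensor_sum_gen (G H : ProjGame) (u : G.Q1) (u' : H.Q1)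
    (m : (G.Q1 × H.Q1) × (G.Q2 × H.Q2) × (G.A × H.A → Option (G.A × H.A)) → ℝ)
    (hm : ∀ K : (G.Q1 × H.Q1) × (G.Q2 × H.Q2) × (G.A × H.A → Option (G.A × H.A)) → ℝ,
      ∑ x, m x * K x
      = ∑ y : (G.Q1 × G.Q2 × (G.A → Option G.A)) × (H.Q1 × H.Q2 × (H.A → Option H.A)),
        G.μ y.1 * H.μ y.2 *
          K ((y.1.1, y.2.1), (y.1.2.1, y.2.2.1), tensorC y.1.2.2 y.2.2.2))
    (F : G.Q2 × H.Q2 → (G.A × H.A → Option (G.A × H.A)) → ℝ) :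
    (∑ v : G.Q2 × H.Q2, ∑ π : G.A × H.A → Option (G.A × H.A), m ((u, u'), v, π) * F v π)
    = ∑ v, ∑ π, ∑ v', ∑ π', G.μ (u, v, π) * H.μ (u', v', π') * F (v, v') (tensorC π π') := by
  have h1 : (∑ v : G.Q2 × H.Q2, ∑ π : G.A × H.A → Option (G.A × H.A),
      m ((u, u'), v, π) * F v π)
      = ∑ x : (G.Q1 × H.Q1) × (G.Q2 × H.Q2) × (G.A × H.A → Option (G.A × H.A)),
        m x * (if x.1 = (u, u') then F x.2.1 x.2.2 else 0) := by
    symm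
    rw [Fintype.sum_prod_type, Finset.sum_eq_single (u, u')]
    · rw [Fintype.sum_prod_type]
      simp
    · intro b _ hb
      simp [hb]
    · simp
  rw [h1, hm (fun x => if x.1 = (u, u') then F x.2.1 x.2.2 else 0),
    Fintype.sum_prod_type, Fintype.sum_prod_type]
  rw [Finset.sum_eq_single u]
  · rw [Fintype.sum_prod_type]
    refine Finset.sum_congr rfl fun v _ => Finset.sum_congr rfl fun π _ => ?_
    rw [Fintype.sum_prod_type, Finset.sum_eq_single u']
    · rw [Fintype.sum_prod_type]
      simp
    · intro b _ hb
      simp [hb]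
    · simp
  · intro b _ hb
    simp [hb]
  · simp

lemma tensor_sum (G H : ProjGame) (u : G.Q1) (u' : H.Q1)
    (F : G.Q2 × H.Q2 → (G.A × H.A → Option (G.A × H.A)) → ℝ) :
    (∑ v : G.Q2 × H.Q2, ∑ π : G.A × H.A → Option (G.A × H.A),
      (G.tensor H).μ ((u, u'), v, π) * F v π)
    = ∑ v, ∑ π, ∑ v', ∑ π', G.μ (u, v, π) * H.μ (u', v', π') * F (v, v') (tensorC π π') :=
  tensor_sum_gen G H u u' _ (tensor_pair G H) F

lemma tensor_wU (G H : ProjGame) (u : G.Q1) (u' : H.Q1) :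
    (G.tensor H).wU (u, u') = G.wU u * H.wU u' := by
  have := tensor_sum G H u u' (fun _ _ => 1)
  simp only [mul_one] at this
  unfold wU
  refine this.trans ?_
  rw [Finset.sum_mul]
  refine Finset.sum_congr rfl fun v _ => ?_
  rw [Finset.sum_mul]
  refine Finset.sum_congr rfl fun π _ => ?_
  simp only [Finset.mul_sum]

lemma tensor_ind (G H : ProjGame) (π : G.A → Option G.A) (π' : H.A → Option H.A)
    (α : G.A) (α' : H.A) (φ : G.A × H.A → ℝ) :
    (∑ b : G.A × H.A, if tensorC π π' b = some (α, α') then φ b else 0)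
    = ∑ β, if π β = some α then (∑ β', if π' β' = some α' then φ (β, β') else 0) else 0 := by
  rw [Fintype.sum_prod_type]
  refine Finset.sum_congr rfl fun β _ => ?_
  have key : ∀ β', tensorC π π' (β, β') = some (α, α') ↔ π β = some α ∧ π' β' = some α' := by
    intro β'
    simp only [tensorC]
    cases π β <;> cases π' β' <;> simp
  simp only [key]
  split_ifs with h <;> simp [h]

lemma tensor_op (G H : ProjGame) (f : (G.Q2 × H.Q2) × (G.A × H.A) → ℝ)
    (u : G.Q1) (u' : H.Q1) (α : G.A) (α' : H.A) :
    (G.tensor H).op f ((u, u'), (α, α'))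
    = G.op (fun q => H.op (fun q' => f ((q.1, q'.1), (q.2, q'.2))) (u', α')) (u, α) := by
  have h := tensor_sum G H u u'
    (fun v π => ∑ b : G.A × H.A, if π b = some (α, α') then f (v, b) else 0)
  have h' : (G.tensor H).op f ((u, u'), (α, α')) =
    (∑ v : G.Q2 × H.Q2, ∑ π : G.A × H.A → Option (G.A × H.A),
      (G.tensor H).μ ((u, u'), v, π) *
        ∑ b : G.A × H.A, if π b = some (α, α') then f (v, b) else 0) / (G.tensor H).wU (u, u') := by
    rfl
  rw [h', h, tensor_wU]
  simp only [tensor_ind, op]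
  rw [mul_comm (G.wU u), ← div_div]
  congr 1
  rw [Finset.sum_div]
  refine Finset.sum_congr rfl fun v _ => ?_
  rw [Finset.sum_div]
  refine Finset.sum_congr rfl fun π _ => ?_
  have : ∀ β, (if π β = some α then
      (∑ v', ∑ π', H.μ (u', v', π') * ∑ β', if π' β' = some α' then f ((v, v'), (β, β')) else 0)
        / H.wU u' else 0)
      = (∑ v', ∑ π', H.μ (u', v', π') * if π β = some α then
        (∑ β', if π' β' = some α' then f ((v, v'), (β, β')) else 0) else 0) / H.wU u' := by
    intro β
    split_ifs <;> simp
  simp only [this]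
  rw [← Finset.sum_div, ← mul_div_assoc]
  congr 1
  rw [Finset.sum_comm (s := (Finset.univ : Finset G.A)), Finset.mul_sum]
  refine Finset.sum_congr rfl fun v' _ => ?_
  rw [Finset.sum_comm (s := (Finset.univ : Finset G.A)), Finset.mul_sum]
  refine Finset.sum_congr rfl fun π' _ => ?_
  rw [mul_assoc, ← Finset.mul_sum]

lemma wU_nonneg (G : ProjGame) (u : G.Q1) : 0 ≤ G.wU u :=
  Finset.sum_nonneg fun _ _ => Finset.sum_nonneg fun _ _ => G.μ_nonneg _

lemma wU_sum (G : ProjGame) : ∑ u, G.wU u = 1 := by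
  rw [← G.μ_sum, Fintype.sum_prod_type]
  refine Finset.sum_congr rfl fun u _ => ?_
  rw [Fintype.sum_prod_type]; rfl

lemma op_nonneg (G : ProjGame) (f : G.Q2 × G.A → ℝ) (hf : ∀ p, 0 ≤ f p) (p) : 0 ≤ G.op f p := by
  refine div_nonneg (Finset.sum_nonneg fun _ _ => Finset.sum_nonneg fun _ _ =>
    mul_nonneg (G.μ_nonneg _) (Finset.sum_nonneg fun _ _ => ?_)) (G.wU_nonneg _)
  split_ifs
  · exact hf _
  · exact le_rfl

lemma op_le (G : ProjGame) (f : G.Q2 × G.A → ℝ) (hf : ∀ p, 0 ≤ f p) (p) :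
    G.op f p ≤ ∑ v, ∑ β, f (v, β) := by
  have hS : 0 ≤ ∑ v, ∑ β, f (v, β) :=
    Finset.sum_nonneg fun _ _ => Finset.sum_nonneg fun _ _ => hf _
  refine div_le_of_le_mul₀ (G.wU_nonneg _) hS ?_
  rw [mul_comm]
  unfold wU
  rw [Finset.sum_mul]
  refine Finset.sum_le_sum fun v _ => ?_
  rw [Finset.sum_mul]
  refine Finset.sum_le_sum fun π _ => mul_le_mul_of_nonneg_left ?_ (G.μ_nonneg _)
  calc _ ≤ ∑ β, f (v, β) := by
        refine Finset.sum_le_sum fun β _ => ?_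
        split_ifs
        · exact le_rfl
        · exact hf _
    _ ≤ _ := Finset.single_le_sum (f := fun v => ∑ β, f (v, β))
        (fun v _ => Finset.sum_nonneg fun _ _ => hf _) (Finset.mem_univ v)

lemma op_smul (G : ProjGame) (c : ℝ) (f : G.Q2 × G.A → ℝ) (p) :
    G.op (fun q => c * f q) p = c * G.op f p := by
  unfold op
  rw [← mul_div_assoc, Finset.mul_sum]
  congr 1
  refine Finset.sum_congr rfl fun v _ => ?_
  rw [Finset.mul_sum]
  refine Finset.sum_congr rfl fun π _ => ?_
  rw [mul_left_comm]
  congr 1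
  rw [Finset.mul_sum]
  refine Finset.sum_congr rfl fun β _ => ?_
  split_ifs <;> simp

lemma op_sum (G : ProjGame) {ι : Type} [Fintype ι] (f : ι → G.Q2 × G.A → ℝ) (p) :
    G.op (fun q => ∑ i, f i q) p = ∑ i, G.op (f i) p := by
  unfold op
  rw [← Finset.sum_div]
  congr 1
  rw [Finset.sum_comm (s := (Finset.univ : Finset ι))]
  refine Finset.sum_congr rfl fun v _ => ?_
  rw [Finset.sum_comm (s := (Finset.univ : Finset ι))]
  refine Finset.sum_congr rfl fun π _ => ?_
  rw [← Finset.mul_sum, Finset.sum_comm (s := (Finset.univ : Finset ι))]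
  congr 1
  refine Finset.sum_congr rfl fun β _ => ?_
  split_ifs <;> simp

/-- squared value of a family -/
noncomputable def vv (G : ProjGame) {ι : Type} [Fintype ι] (f : G.Q2 × G.A → ι → ℝ) : ℝ :=
  ∑ u, G.wU u * ∑ α, ∑ i, (G.op (fun q => f q i) (u, α)) ^ 2

lemma vv_bound (G : ProjGame) {ι : Type} [Fintype ι] (f : G.Q2 × G.A → ι → ℝ)
    (hf : ∀ p i, 0 ≤ f p i) (c : ℝ) (h : ∀ v, ∑ i, (∑ β, f (v, β) i) ^ 2 ≤ c) :
    G.vv f ≤ Fintype.card G.A * (Fintype.card G.Q2 * (Fintype.card G.Q2 * c)) := by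
  have h1 : ∑ i, (∑ v, ∑ β, f (v, β) i) ^ 2 ≤ Fintype.card G.Q2 * (Fintype.card G.Q2 * c) := by
    calc ∑ i, (∑ v, ∑ β, f (v, β) i) ^ 2
        ≤ ∑ i, Fintype.card G.Q2 * ∑ v, (∑ β, f (v, β) i) ^ 2 :=
          Finset.sum_le_sum fun i _ => by
            have := sq_sum_le_card_mul_sum_sq (s := (Finset.univ : Finset G.Q2))
              (f := fun v => ∑ β, f (v, β) i)
            simpa using this
      _ = Fintype.card G.Q2 * ∑ v, ∑ i, (∑ β, f (v, β) i) ^ 2 := by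
          rw [← Finset.mul_sum, Finset.sum_comm]
      _ ≤ Fintype.card G.Q2 * ∑ v : G.Q2, c := by
          gcongr with v
          exact h v
      _ = _ := by simp
  calc G.vv f ≤ ∑ u, G.wU u * ∑ α : G.A, (Fintype.card G.Q2 * (Fintype.card G.Q2 * c)) := by
        refine Finset.sum_le_sum fun u _ => mul_le_mul_of_nonneg_left ?_ (G.wU_nonneg _)
        refine Finset.sum_le_sum fun α _ => le_trans (Finset.sum_le_sum fun i _ => ?_) h1
        exact pow_le_pow_left₀ (G.op_nonneg _ (fun q => hf q i) _) (G.op_le _ (fun q => hf q i) _) 2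
    _ = _ := by rw [← Finset.sum_mul, G.wU_sum]; simp

lemma valPlus_bdd (G : ProjGame) : BddAbove { x | ∃ n : ℕ, 0 < n ∧ ∃ f : G.Q2 × G.A → Fin n → ℝ,
    (∀ p i, 0 ≤ f p i) ∧
    (∀ v, Real.sqrt (∑ i, (∑ β, f (v, β) i) ^ 2) ≤ 1) ∧
    x = Real.sqrt (∑ u, G.wU u * ∑ α, ∑ i, (G.op (fun q => f q i) (u, α)) ^ 2) } := by
  refine ⟨Real.sqrt (Fintype.card G.A * (Fintype.card G.Q2 * (Fintype.card G.Q2 * 1))), ?_⟩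
  rintro x ⟨n, _, f, hf, h, rfl⟩
  refine Real.sqrt_le_sqrt (G.vv_bound f hf 1 fun v => ?_)
  have := h v
  rwa [Real.sqrt_le_one] at this

lemma collVal_bdd (G : ProjGame) :
    BddAbove { x | ∃ f, G.IsBob f ∧ x = Real.sqrt (G.normUsq (G.op f)) } := by
  refine ⟨Real.sqrt (Fintype.card G.A * (Fintype.card G.Q2 * (Fintype.card G.Q2 * 1))), ?_⟩
  rintro x ⟨f, ⟨hf, h⟩, rfl⟩
  have := G.vv_bound (ι := Unit) (fun q _ => f q) (fun p _ => hf p) 1 (fun v => by simp [h v])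
  refine Real.sqrt_le_sqrt (le_trans (le_of_eq ?_) this)
  simp [vv, normUsq]

lemma valPlus_nonneg (G : ProjGame) : 0 ≤ G.valPlus := by
  refine Real.sSup_nonneg ?_
  rintro x ⟨n, _, f, hf, h, rfl⟩
  exact Real.sqrt_nonneg _

lemma collVal_nonneg (G : ProjGame) : 0 ≤ G.collVal := by
  refine Real.sSup_nonneg ?_
  rintro x ⟨f, hf, rfl⟩
  exact Real.sqrt_nonneg _

lemma vv_le (G : ProjGame) {ι : Type} [Fintype ι] [Nonempty ι] (f : G.Q2 × G.A → ι → ℝ)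
    (hf : ∀ p i, 0 ≤ f p i) (c : ℝ) (hc : 0 ≤ c) (h : ∀ v, ∑ i, (∑ β, f (v, β) i) ^ 2 ≤ c ^ 2) :
    Real.sqrt (G.vv f) ≤ G.valPlus * c := by
  rcases hc.eq_or_lt with rfl | hc
  · have := G.vv_bound f hf _ h
    rw [mul_zero, Real.sqrt_eq_zero_of_nonpos]
    simpa using this
  rw [← div_le_iff₀ hc]
  let e := Fintype.equivFin ι
  refine le_csSup G.valPlus_bdd ⟨Fintype.card ι, Fintype.card_pos,
    fun q j => c⁻¹ * f q (e.symm j), fun p i => mul_nonneg (by positivity) (hf _ _), fun v => ?_, ?_⟩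
  · rw [Real.sqrt_le_one]
    simp only [← Finset.mul_sum, mul_pow]
    rw [Equiv.sum_comp e.symm (fun i => (∑ β, f (v, β) i) ^ 2)]
    rw [inv_pow, inv_mul_le_iff₀ (by positivity), mul_one]
    exact h v
  · have : ∀ u α, ∑ j, (G.op (fun q => c⁻¹ * f q (e.symm j)) (u, α)) ^ 2
        = (c⁻¹) ^ 2 * ∑ i, (G.op (fun q => f q i) (u, α)) ^ 2 := by
      intro u α
      rw [Finset.mul_sum, ← Equiv.sum_comp e.symm]
      refine Finset.sum_congr rfl fun j _ => ?_
      rw [op_smul, mul_pow]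
    simp only [this, ← Finset.mul_sum, mul_left_comm _ ((c⁻¹) ^ 2)]
    rw [Real.sqrt_mul (by positivity), Real.sqrt_sq (by positivity), mul_comm, div_eq_mul_inv]
    rfl

end ProjGame

/-- Any two projection games satisfy `‖G ⊗ H‖ ≤ val₊(G) · ‖H‖`. -/
theorem collVal_tensor_le_valPlus (G H : ProjGame) :
    (G.tensor H).collVal ≤ G.valPlus * H.collVal := by
  refine Real.sSup_le ?_ (mul_nonneg G.valPlus_nonneg H.collVal_nonneg)
  rintro x ⟨f, ⟨hf, hs⟩, rfl⟩
  change (G.Q2 × H.Q2) × (G.A × H.A) → ℝ at f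
  let g : G.Q2 × G.A → H.Q1 × H.A → ℝ := fun q p =>
    Real.sqrt (H.wU p.1) * H.op (fun q' => f ((q.1, q'.1), (q.2, q'.2))) p
  have hop : ∀ v p, ∑ β, g (v, β) p = Real.sqrt (H.wU p.1) *
      H.op (fun q' => ∑ β, f ((v, q'.1), (β, q'.2))) p := by
    intro v p
    rw [ProjGame.op_sum, Finset.mul_sum]
  have key := G.vv_le g
    (fun q p => mul_nonneg (Real.sqrt_nonneg _) (H.op_nonneg _ (fun _ => hf _) _))
    H.collVal H.collVal_nonneg (fun v => ?_)
  · refine le_trans (le_of_eq ?_) key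
    congr 1
    have e1 : (G.tensor H).normUsq ((G.tensor H).op f) = ∑ w : G.Q1 × H.Q1, (G.tensor H).wU w *
      ∑ a : G.A × H.A, ((G.tensor H).op f (w, a)) ^ 2 := rfl
    rw [e1, Fintype.sum_prod_type]
    refine Finset.sum_congr rfl fun u _ => ?_
    simp only [ProjGame.tensor_wU, Fintype.sum_prod_type, ProjGame.tensor_op, g, ProjGame.op_smul, mul_pow,
      Real.sq_sqrt (H.wU_nonneg _), mul_assoc]
    rw [← Finset.mul_sum]
    congr 1
    rw [Finset.sum_comm]
    refine Finset.sum_congr rfl fun u' _ => ?_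
    simp only [Finset.mul_sum]
  · simp only [hop, mul_pow, Real.sq_sqrt (H.wU_nonneg _)]
    have : ∑ p : H.Q1 × H.A, H.wU p.1 * (H.op (fun q' => ∑ β, f ((v, q'.1), (β, q'.2))) p) ^ 2
        = H.normUsq (H.op (fun q' => ∑ β, f ((v, q'.1), (β, q'.2)))) := by
      rw [Fintype.sum_prod_type]
      simp only [ProjGame.normUsq, Finset.mul_sum]
    rw [this]
    rw [← Real.sqrt_le_left H.collVal_nonneg]
    refine le_csSup H.collVal_bdd ⟨_, ⟨fun p => Finset.sum_nonneg fun _ _ => hf _, fun v' => ?_⟩, rfl⟩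
    rw [Finset.sum_comm, ← hs (v, v')]
    exact (Fintype.sum_prod_type (fun b : G.A × H.A => f ((v, v'), b))).symm
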